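/- Let a, b, c, d : ℝ → ℝ be continuous and let A, B, C : ℝ → ℝ be continuously differentiable functions satisfying the system A′ = 2c A − 2a B, B′ = 2b A − 2d B, C′ = (c − d) C. Let ψ : ℝ × ℝ → ℂ be smooth (C² in x, C¹ in t, with ψ_x also C¹ in t and ∂_t∂_xψ = ∂_x∂_tψ) and satisfy i ∂ψ/∂t = Hψ. Then the function ψ₁(x,t) := −i A(t) ψ_x(x,t) + B(t) x ψ(x,t) + C(t) ψ(x,t), i.e. ψ₁ = (A p + B x + C)ψ with p = −i∂/∂x, satisfies the adjoint equation i ∂ψ₁/∂t = H†ψ₁. -/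

import Mathlib

/-- If A, B, C satisfy A′ = 2cA − 2aB, B′ = 2bA − 2dB, C′ = (c−d)C and
ψ solves i ψ_t = Hψ, then ψ₁ = (A p + B x + C)ψ = −iAψ_x + Bxψ + Cψ solves the
adjoint equation i (ψ₁)_t = H† ψ₁. -/
theorem statement_1
    (a b c d : ℝ → ℝ) (ha : Continuous a) (hb : Continuous b)
    (hc : Continuous c) (hd : Continuous d)
    (A B C : ℝ → ℝ)
    -- the first-order system for the coefficients of the linear invariant
    (hA : ∀ t, HasDerivAt A (2 * c t * A t - 2 * a t * B t) t)
    (hB : ∀ t, HasDerivAt B (2 * b t * A t - 2 * d t * B t) t)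
    (hC : ∀ t, HasDerivAt C ((c t - d t) * C t) t)
    (ψ ψx ψxx ψxxx ψt ψxt : ℝ → ℝ → ℂ)
    -- smoothness of ψ in x (up to the orders appearing)
    (hψx : ∀ x t, HasDerivAt (fun x' => ψ x' t) (ψx x t) x)
    (hψxx : ∀ x t, HasDerivAt (fun x' => ψx x' t) (ψxx x t) x)
    (hψxxx : ∀ x t, HasDerivAt (fun x' => ψxx x' t) (ψxxx x t) x)
    -- smoothness in t: ψ and ψ_x are C¹ in t
    (hψt : ∀ x t, HasDerivAt (fun t' => ψ x t') (ψt x t) t)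
    (hψxt : ∀ x t, HasDerivAt (fun t' => ψx x t') (ψxt x t) t)
    -- equality of mixed partials: ∂_t ∂_x ψ = ∂_x ∂_t ψ
    (hmix : ∀ x t, HasDerivAt (fun x' => ψt x' t) (ψxt x t) x)
    -- the time-dependent Schrödinger equation i ψ_t = Hψ
    (hSE : ∀ x t, Complex.I * ψt x t =
        -(a t : ℂ) * ψxx x t + (b t : ℂ) * (x : ℂ) ^ 2 * ψ x t
          - Complex.I * (c t : ℂ) * (ψ x t + (x : ℂ) * ψx x t)
          - Complex.I * (d t : ℂ) * ((x : ℂ) * ψx x t))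
    (ψ₁ : ℝ → ℝ → ℂ)
    (hψ₁ : ∀ x t, ψ₁ x t =
        -Complex.I * (A t : ℂ) * ψx x t + (B t : ℂ) * (x : ℂ) * ψ x t
          + (C t : ℂ) * ψ x t) :
    -- the adjoint equation i (ψ₁)_t = H† ψ₁
    ∀ x t, Complex.I * deriv (fun t' => ψ₁ x t') t =
        -(a t : ℂ) * deriv (fun x' => deriv (fun x'' => ψ₁ x'' t) x') x
          + (b t : ℂ) * (x : ℂ) ^ 2 * ψ₁ x t
          - Complex.I * (d t : ℂ) * (ψ₁ x t + (x : ℂ) * deriv (fun x' => ψ₁ x' t) x)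
          - Complex.I * (c t : ℂ) * ((x : ℂ) * deriv (fun x' => ψ₁ x' t) x) := by
  intro x t
  have hX : ∀ y : ℝ, HasDerivAt (fun y' : ℝ => (y' : ℂ)) 1 y := fun y =>
    Complex.ofRealCLM.hasDerivAt
  -- the x-derivative of the Schrodinger equation
  have hD : Complex.I * ψxt x t =
      -(a t : ℂ) * ψxxx x t + (b t : ℂ) * (2 * (x : ℂ) * ψ x t + (x : ℂ) ^ 2 * ψx x t)
        - Complex.I * (c t : ℂ) * (2 * ψx x t + (x : ℂ) * ψxx x t)
        - Complex.I * (d t : ℂ) * (ψx x t + (x : ℂ) * ψxx x t) := by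
    have h1 := (hmix x t).const_mul Complex.I
    have h2 := ((((hψxxx x t).const_mul (-(a t : ℂ))).add
      ((((hX x).pow 2).const_mul (b t : ℂ)).mul (hψx x t))).sub
      (((hψx x t).add ((hX x).mul (hψxx x t))).const_mul (Complex.I * (c t : ℂ)))).sub
      (((hX x).mul (hψxx x t)).const_mul (Complex.I * (d t : ℂ)))
    have h3 := h1.unique (h2.congr_of_eventuallyEq
      (Filter.Eventually.of_forall fun y => hSE y t))
    rw [h3]
    simp
    ring
  have e1 : ∀ y, HasDerivAt (fun y' => ψ₁ y' t)
      (-Complex.I * (A t : ℂ) * ψxx y t + (B t : ℂ) * (ψ y t + (y : ℂ) * ψx y t)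
        + (C t : ℂ) * ψx y t) y := by
    intro y
    have h := ((((hψxx y t).const_mul (-Complex.I * (A t : ℂ))).add
      (((hX y).const_mul (B t : ℂ)).mul (hψx y t))).add
      ((hψx y t).const_mul (C t : ℂ))).congr_of_eventuallyEq
      (Filter.Eventually.of_forall fun y => hψ₁ y t)
    refine h.congr_deriv ?_
    ring
  have e2 : HasDerivAt (fun y => deriv (fun y' => ψ₁ y' t) y)
      (-Complex.I * (A t : ℂ) * ψxxx x t + (B t : ℂ) * (2 * ψx x t + (x : ℂ) * ψxx x t)
        + (C t : ℂ) * ψxx x t) x := by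
    have h := ((((hψxxx x t).const_mul (-Complex.I * (A t : ℂ))).add
      (((hψx x t).add ((hX x).mul (hψxx x t))).const_mul (B t : ℂ))).add
      ((hψxx x t).const_mul (C t : ℂ))).congr_of_eventuallyEq
      (Filter.Eventually.of_forall fun y => (e1 y).deriv)
    refine h.congr_deriv ?_
    ring
  have e3 := (((((hA t).ofReal_comp.const_mul (-Complex.I)).mul (hψxt x t)).add
      (((hB t).ofReal_comp.mul_const (x : ℂ)).mul (hψt x t))).add
      ((hC t).ofReal_comp.mul (hψt x t))).congr_of_eventuallyEq
      (Filter.Eventually.of_forall fun s => hψ₁ x s)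
  rw [e3.deriv, e2.deriv, (e1 x).deriv, hψ₁ x t]
  push_cast
  linear_combination (-Complex.I * (A t : ℂ)) * hD
    + ((B t : ℂ) * (x : ℂ) + (C t : ℂ)) * hSE x t
    + (2 * (a t : ℂ) * (B t : ℂ) * ψx x t) * Complex.I_sq
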